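/- arXiv:1107.0444 — 2 statements merged into one kernel-verified Lean document; each statement's English description precedes it below -/
import Mathlib

section
/- Let I be an index set and for each i ∈ I let D_i be a commutative discrete valuation ring with uniformizer π_i (an irreducible element of D_i) and fraction field K_i = Frac(D_i). Let Υ be the multiplicative submonoid of the product ring ∏_{i∈I} D_i consisting of all tuples s = (s_i) such that each s_i is a power of π_i and s_i = 1 for all but finitely many i ∈ I. Let A be the subring of ∏_{i∈I} K_i consisting of all tuples f = (f_i) such that f_i lies in the image of D_i in K_i for all but finitely many i ∈ I (the restricted product, or adèle ring, of the K_i with respect to the D_i). Then the componentwise map ∏_{i∈I} D_i → A exhibits A as the localization of the ring ∏_{i∈I} D_i at the multiplicative set Υ (i.e., IsLocalization holds for Υ and A). -/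
open Filter

variable {I : Type*} (D : I → Type*) (K : I → Type*)
  [∀ i, CommRing (D i)] [∀ i, Field (K i)] [∀ i, Algebra (D i) (K i)]

/-- The restricted product (adèle ring) of the fields `K i` with respect to the
subrings `D i`: tuples `(f i)` with `f i` in the image of `D i` for almost all `i`. -/
def adeleSubring : Subring (∀ i, K i) where
  carrier := {f | ∀ᶠ i in cofinite, f i ∈ (algebraMap (D i) (K i)).range}
  mul_mem' := by
    intro a b ha hb
    have ha' : ∀ᶠ i in cofinite, a i ∈ (algebraMap (D i) (K i)).range := ha
    have hb' : ∀ᶠ i in cofinite, b i ∈ (algebraMap (D i) (K i)).range := hb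
    exact (ha'.and hb').mono fun _ h => mul_mem h.1 h.2
  one_mem' := by
    show ∀ᶠ i in cofinite, (1 : ∀ j, K j) i ∈ (algebraMap (D i) (K i)).range
    exact Eventually.of_forall fun _ => one_mem _
  add_mem' := by
    intro a b ha hb
    have ha' : ∀ᶠ i in cofinite, a i ∈ (algebraMap (D i) (K i)).range := ha
    have hb' : ∀ᶠ i in cofinite, b i ∈ (algebraMap (D i) (K i)).range := hb
    exact (ha'.and hb').mono fun _ h => add_mem h.1 h.2
  zero_mem' := by
    show ∀ᶠ i in cofinite, (0 : ∀ j, K j) i ∈ (algebraMap (D i) (K i)).range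
    exact Eventually.of_forall fun _ => zero_mem _
  neg_mem' := by
    intro a ha
    have ha' : ∀ᶠ i in cofinite, a i ∈ (algebraMap (D i) (K i)).range := ha
    exact ha'.mono fun _ h => neg_mem h

theorem mem_adeleSubring {f : ∀ i, K i} :
    f ∈ adeleSubring D K ↔ ∀ᶠ i in cofinite, f i ∈ (algebraMap (D i) (K i)).range :=
  Iff.rfl

/-- The componentwise ring homomorphism `∏ i, D i → 𝔸` into the adèle ring. -/
def toAdeles : (∀ i, D i) →+* adeleSubring D K :=
  RingHom.codRestrict
    (Pi.ringHom fun i => (algebraMap (D i) (K i)).comp (Pi.evalRingHom D i))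
    (adeleSubring D K)
    (fun d => (mem_adeleSubring D K).mpr (Eventually.of_forall fun i => ⟨d i, rfl⟩))

/-- The multiplicative set of tuples `(s i)` in `∏ i, D i` in which every component is a power
of the uniformizer `π i` and almost all components are `1`. -/
def uniformizerSubmonoid (π : ∀ i, D i) : Submonoid (∀ i, D i) where
  carrier := {s | (∀ i, ∃ n : ℕ, s i = π i ^ n) ∧ ∀ᶠ i in cofinite, s i = 1}
  mul_mem' := by
    intro a b ha hb
    have ha' : (∀ i, ∃ n : ℕ, a i = π i ^ n) ∧ ∀ᶠ i in cofinite, a i = 1 := ha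
    have hb' : (∀ i, ∃ n : ℕ, b i = π i ^ n) ∧ ∀ᶠ i in cofinite, b i = 1 := hb
    refine ⟨fun i => ?_, (ha'.2.and hb'.2).mono fun i h => by
      simp [Pi.mul_apply, h.1, h.2]⟩
    obtain ⟨n, hn⟩ := ha'.1 i
    obtain ⟨nn, hnn⟩ := hb'.1 i
    exact ⟨n + nn, by simp [Pi.mul_apply, hn, hnn, pow_add]⟩
  one_mem' := ⟨fun i => ⟨0, by simp⟩, Eventually.of_forall fun _ => rfl⟩

/-- Every element of the fraction field of a discrete valuation ring becomes integral after
multiplication by a power of a uniformizer. -/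
theorem exists_mul_algebraMap_pow_mem_range {R F : Type*} [CommRing R] [IsDomain R]
    [IsDiscreteValuationRing R] [Field F] [Algebra R F] [IsFractionRing R F]
    {ϖ : R} (hϖ : Irreducible ϖ) (x : F) :
    ∃ n : ℕ, x * algebraMap R F (ϖ ^ n) ∈ (algebraMap R F).range := by
  obtain ⟨⟨a, b⟩, hab⟩ := IsLocalization.surj (nonZeroDivisors R) x
  obtain ⟨n, u, hb⟩ := IsDiscreteValuationRing.eq_unit_mul_pow_irreducible
    (nonZeroDivisors.coe_ne_zero b) hϖ
  refine ⟨n, a * ↑u⁻¹, ?_⟩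
  have hpow : ϖ ^ n = b * ↑u⁻¹ := by
    rw [hb, mul_right_comm, Units.mul_inv, one_mul]
  rw [hpow, map_mul, map_mul, ← mul_assoc, hab]

/-- For a family of commutative discrete valuation rings `D i` with
uniformizers `π i` and fraction fields `K i`, the adèle ring (restricted product of the `K i`
with respect to the `D i`) is the localization of the product ring `∏ i, D i` at the
multiplicative set of tuples that are componentwise powers of the uniformizers and are
almost everywhere `1`. -/
theorem stmt_1 [∀ i, IsDomain (D i)] [∀ i, IsDiscreteValuationRing (D i)]
    [∀ i, IsFractionRing (D i) (K i)]
    (π : ∀ i, D i) (hπ : ∀ i, Irreducible (π i)) :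
    @IsLocalization (∀ i, D i) _ (uniformizerSubmonoid D π) (adeleSubring D K) _
      (toAdeles D K).toAlgebra := by
  let := (toAdeles D K).toAlgebra
  have hinj : ∀ i, Function.Injective (algebraMap (D i) (K i)) := fun i =>
    IsFractionRing.injective (D i) (K i)
  refine (isLocalization_iff _ _).mpr ⟨?_, ?_, ?_⟩
  · rintro ⟨s, hpow, hone⟩
    refine IsUnit.of_mul_eq_one
      ⟨fun i => (algebraMap (D i) (K i) (s i))⁻¹, hone.mono fun i hi => ?_⟩ ?_
    · exact ⟨1, by simp [hi]⟩
    · refine Subtype.ext (funext fun i => mul_inv_cancel₀ ?_)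
      obtain ⟨n, hn⟩ := hpow i
      change algebraMap (D i) (K i) (s i) ≠ 0
      rw [hn, map_ne_zero_iff _ (hinj i)]
      exact pow_ne_zero n (hπ i).ne_zero
  · rintro ⟨f, hf⟩
    have hden : ∀ i, ∃ n : ℕ, f i * algebraMap (D i) (K i) (π i ^ n) ∈
        (algebraMap (D i) (K i)).range ∧ (f i ∈ (algebraMap (D i) (K i)).range → n = 0) := by
      intro i
      by_cases hi : f i ∈ (algebraMap (D i) (K i)).range
      · exact ⟨0, by simpa using hi, fun _ => rfl⟩
      · obtain ⟨n, hn⟩ := exists_mul_algebraMap_pow_mem_range (hπ i) (f i)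
        exact ⟨n, hn, fun h => absurd h hi⟩
    choose n hn hzero using hden
    choose a ha using hn
    refine ⟨⟨a, fun i => π i ^ n i, fun i => ⟨n i, rfl⟩,
      ((mem_adeleSubring D K).mp hf).mono fun i hi => ?_⟩, ?_⟩
    · simp [hzero i hi]
    · exact Subtype.ext (funext fun i => (ha i).symm)
  · intro x y hxy
    have hxy' : x = y := funext fun i => hinj i (congrFun (congrArg Subtype.val hxy) i)
    exact ⟨1, by rw [hxy']⟩
end

section
/- Let k be a field, m ≥ 1 an integer, and let Γ(m) be the subring of the m×m matrix ring M_m(k[[x]]) over the formal power series ring k[[x]] consisting of all matrices whose entries strictly below the diagonal lie in the maximal ideal (x) of k[[x]] (i.e. have zero constant term). Then the canonical inclusion Γ(m) ↪ M_m(k[[x]]) is an epimorphism in the category of rings; that is, any two ring homomorphisms from M_m(k[[x]]) to a ring T that agree on Γ(m) are equal. -/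
/-- The subring `Γ(m)` of `M_m(k[[x]])` consisting of the matrices whose entries strictly
below the diagonal lie in the maximal ideal `(x)` of `k[[x]]`, i.e. have zero constant
coefficient. -/
noncomputable def Gamma (k : Type*) [Field k] (m : ℕ) :
    Subring (Matrix (Fin m) (Fin m) (PowerSeries k)) where
  carrier := {A | ∀ i j : Fin m, j < i → PowerSeries.constantCoeff (R := k) (A i j) = 0}
  mul_mem' := by
    intro A B hA hB
    have hA' : ∀ i j : Fin m, j < i → PowerSeries.constantCoeff (R := k) (A i j) = 0 := hA
    have hB' : ∀ i j : Fin m, j < i → PowerSeries.constantCoeff (R := k) (B i j) = 0 := hB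
    intro i j hji
    show PowerSeries.constantCoeff (R := k) ((A * B) i j) = 0
    rw [Matrix.mul_apply, map_sum]
    refine Finset.sum_eq_zero fun l _ => ?_
    rw [map_mul]
    rcases le_or_gt l j with h | h
    · rw [hA' i l (h.trans_lt hji), zero_mul]
    · rw [hB' l j h, mul_zero]
  one_mem' := by
    intro i j hji
    show PowerSeries.constantCoeff (R := k) ((1 : Matrix (Fin m) (Fin m) (PowerSeries k)) i j) = 0
    rw [Matrix.one_apply_ne hji.ne', map_zero]
  add_mem' := by
    intro A B hA hB
    have hA' : ∀ i j : Fin m, j < i → PowerSeries.constantCoeff (R := k) (A i j) = 0 := hA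
    have hB' : ∀ i j : Fin m, j < i → PowerSeries.constantCoeff (R := k) (B i j) = 0 := hB
    intro i j hji
    show PowerSeries.constantCoeff (R := k) ((A + B) i j) = 0
    rw [Matrix.add_apply, map_add, hA' i j hji, hB' i j hji, add_zero]
  zero_mem' := by
    intro i j hji
    show PowerSeries.constantCoeff (R := k) ((0 : Matrix (Fin m) (Fin m) (PowerSeries k)) i j) = 0
    rw [Matrix.zero_apply, map_zero]
  neg_mem' := by
    intro A hA
    have hA' : ∀ i j : Fin m, j < i → PowerSeries.constantCoeff (R := k) (A i j) = 0 := hA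
    intro i j hji
    show PowerSeries.constantCoeff (R := k) ((-A) i j) = 0
    rw [Matrix.neg_apply, map_neg, hA' i j hji, neg_zero]

theorem single_mem_Gamma {k : Type*} [Field k] {m : ℕ} {i j : Fin m} (hij : i ≤ j)
    (a : PowerSeries k) : Matrix.single i j a ∈ Gamma k m := by
  intro p q hqp
  have hne : ¬(i = p ∧ j = q) := by
    rintro ⟨rfl, rfl⟩
    exact absurd hij (not_le.mpr hqp)
  change PowerSeries.constantCoeff (R := k) (Matrix.single i j a p q) = 0
  rw [Matrix.single_apply_of_ne _ _ _ _ _ hne, map_zero]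

/-- For a field `k` and `m ≥ 1`, the canonical inclusion
`Γ(m) ↪ M_m(k[[x]])` is an epimorphism in the category of rings: any two ring homomorphisms
out of `M_m(k[[x]])` that agree on `Γ(m)` are equal. -/
theorem stmt_6 (k : Type*) [Field k] (m : ℕ) (hm : 1 ≤ m)
    (T : Type*) [Ring T]
    (g h : Matrix (Fin m) (Fin m) (PowerSeries k) →+* T)
    (hgh : ∀ A ∈ Gamma k m, g A = h A) :
    g = h := by
  have hsingle : ∀ (i j : Fin m) (a : PowerSeries k),
      g (Matrix.single i j a) = h (Matrix.single i j a) := by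
    intro i j a
    rcases le_total i j with hij | hji
    · exact hgh _ (single_mem_Gamma hij a)
    · calc g (Matrix.single i j a)
          = g (Matrix.single i j a) * g (Matrix.single j j 1) := by
            rw [← map_mul, Matrix.single_mul_single_same, mul_one]
        _ = g (Matrix.single i j a) * (h (Matrix.single j i 1) * h (Matrix.single i j 1)) := by
            rw [hgh _ (single_mem_Gamma le_rfl 1), ← map_mul h, Matrix.single_mul_single_same,
              mul_one]
        _ = g (Matrix.single i i a) * h (Matrix.single i j 1) := by
            rw [← hgh _ (single_mem_Gamma hji 1), ← mul_assoc, ← map_mul g,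
              Matrix.single_mul_single_same, mul_one]
        _ = h (Matrix.single i j a) := by
            rw [hgh _ (single_mem_Gamma le_rfl a), ← map_mul, Matrix.single_mul_single_same,
              mul_one]
  ext A
  rw [Matrix.matrix_eq_sum_single A]
  simp only [map_sum, hsingle]
end
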